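/- For n ≥ 3, a hypergraph H = (X, 𝓔) on n vertices attains the minimum s'(n,2) = 1 − ⌊n²/4⌋/C(n,2) of Σ_{S ∈ 𝓔_2 ∪ 𝓔⁰_3} C(n,|S|)^{−1} if and only if the graph 𝓔_2 is the complement of a complete bipartite graph with parts of sizes ⌊n/2⌋ and ⌈n/2⌉. -/

import Mathlib

/-!
Let `G` be the graph of pairs *not* in `𝓔_2`, with `m` edges and `t` triangles. Then
`hSum n 2 𝓔 = 1 - m / C(n,2) + t / C(n,3)` (`hSum_eq`), so with `d = m - ⌊n²/4⌋` the claim is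
`(n - 2) d ≤ 3 t`, with equality only for the balanced complete bipartite graph.

If `d > 0` the inequality is strict (`triangle_lower_bound`). The tool is Goodman's bound
`|S| T ≥ 2 M² - |S|² M` on a vertex set `S`, where `M` and `T` are the numbers of ordered edges and
ordered triangles in `S` (`goodman`). For even `n` it suffices directly on the whole vertex set. For
`n = 2k + 1` it is too weak when `d` is small; but then some vertex has degree at most `k`, and
deleting it leaves a graph on `2k` vertices with at least `k² + d` edges, to which the even case
applies. If instead all degrees exceed `k`, then `d ≥ (k + 1) / 2`, and Goodman's bound on the whole
graph is again sufficient.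

If `d ≤ 0`, the inequality is trivial and equality forces `d = 0` and `t = 0`, so `G` is a
Turán-maximal triangle-free graph, and uniqueness in Turán's theorem identifies it (`exists_part_of_triangle_free`).
-/

open Finset

/-- A hypergraph (edge set `𝓔` over vertex type `α`) is `q`-linear if any two
distinct edges intersect in fewer than `q` vertices. -/
def qLinear {α : Type*} [DecidableEq α] (q : ℕ) (𝓔 : Finset (Finset α)) : Prop :=
  ∀ E ∈ 𝓔, ∀ E' ∈ 𝓔, E ≠ E' → (E ∩ E').card < q

/-- `𝓔_k`: the family of `k`-element sets contained in some edge of `𝓔`. -/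
def secE {α : Type*} [DecidableEq α] (k : ℕ) (𝓔 : Finset (Finset α)) :
    Finset (Finset α) :=
  𝓔.biUnion fun E => E.powersetCard k

/-- `𝓔⁰_{k+1}` (relative to vertex set `V`): the `(k+1)`-element subsets of `V`
none of whose `k`-element subsets belongs to `𝓔_k`. -/
def zeroE {α : Type*} [DecidableEq α] (V : Finset α) (k : ℕ)
    (𝓔 : Finset (Finset α)) : Finset (Finset α) :=
  (V.powersetCard (k + 1)).filter fun F => ∀ G ∈ F.powersetCard k, G ∉ secE k 𝓔

/-- The YBLM-type sum `Σ_{S ∈ 𝓔_k ∪ 𝓔⁰_{k+1}} C(n,|S|)⁻¹` for a hypergraph on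
`n` vertices. -/
noncomputable def hSum (n k : ℕ) (𝓔 : Finset (Finset (Fin n))) : ℝ :=
  ∑ S ∈ secE k 𝓔 ∪ zeroE Finset.univ k 𝓔, ((n.choose S.card : ℝ))⁻¹

/-- `s(n,k)`: the minimum of `hSum n k 𝓔` over all `(k-1)`-linear hypergraphs
on `n` vertices. -/
noncomputable def sVal (n k : ℕ) : ℝ :=
  sInf {r : ℝ | ∃ 𝓔 : Finset (Finset (Fin n)), qLinear (k - 1) 𝓔 ∧ r = hSum n k 𝓔}

/-- `s'(n,k)`: the minimum of `hSum n k 𝓔` over all hypergraphs on `n`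
vertices. -/
noncomputable def s'Val (n k : ℕ) : ℝ :=
  sInf {r : ℝ | ∃ 𝓔 : Finset (Finset (Fin n)), r = hSum n k 𝓔}

/-! ### Goodman's bound -/

/-- Goodman's inequality for a symmetric `[0,1]`-valued weight `a` on a finite set, in terms of
sums over ordered pairs and ordered triples. It holds because
`a v w * a u w ≥ a v w + a u w - 1`, followed by Cauchy–Schwarz for the degrees. -/
lemma goodman {V : Type*} (S : Finset V) (a : V → V → ℝ)
    (hs : ∀ u v, a u v = a v u) (h0 : ∀ u v, 0 ≤ a u v) (h1 : ∀ u v, a u v ≤ 1) :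
    2 * (∑ u ∈ S, ∑ v ∈ S, a u v) ^ 2 - (#S : ℝ) ^ 2 * (∑ u ∈ S, ∑ v ∈ S, a u v) ≤
      #S * ∑ u ∈ S, ∑ v ∈ S, ∑ w ∈ S, a u v * a v w * a u w := by
  have key : ∑ u ∈ S, ∑ v ∈ S, ∑ w ∈ S, (a u v * a v w + a u v * a u w - a u v) ≤
      ∑ u ∈ S, ∑ v ∈ S, ∑ w ∈ S, a u v * a v w * a u w := by
    refine sum_le_sum fun u _ => sum_le_sum fun v _ => sum_le_sum fun w _ => ?_
    have := mul_nonneg (h0 u v) (mul_nonneg (sub_nonneg.2 (h1 v w)) (sub_nonneg.2 (h1 u w)))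
    nlinarith
  have e1 : ∑ u ∈ S, ∑ v ∈ S, ∑ w ∈ S, a u v * a u w = ∑ u ∈ S, (∑ v ∈ S, a u v) ^ 2 := by
    refine sum_congr rfl fun u _ => ?_
    rw [sq, sum_mul_sum]
  have e2 : ∑ u ∈ S, ∑ v ∈ S, ∑ w ∈ S, a u v * a v w = ∑ u ∈ S, (∑ v ∈ S, a u v) ^ 2 := by
    rw [sum_comm, ← e1]
    refine sum_congr rfl fun v _ => sum_congr rfl fun u _ => sum_congr rfl fun w _ => ?_
    rw [hs u v]
  have e3 : ∑ u ∈ S, ∑ v ∈ S, ∑ _w ∈ S, a u v = #S * ∑ u ∈ S, ∑ v ∈ S, a u v := by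
    simp [mul_sum]
  simp only [sum_sub_distrib, sum_add_distrib] at key
  rw [e1, e2, e3] at key
  have cs := sq_sum_le_card_mul_sum_sq (s := S) (f := fun u => ∑ v ∈ S, a u v)
  have hc : (0 : ℝ) ≤ #S := by positivity
  nlinarith [mul_le_mul_of_nonneg_left key hc]

/-- Goodman's inequality on a set of `2k` points. -/
lemma goodman_even {V : Type*} (S : Finset V) (a : V → V → ℝ)
    (hs : ∀ u v, a u v = a v u) (h0 : ∀ u v, 0 ≤ a u v) (h1 : ∀ u v, a u v ≤ 1)
    {k : ℕ} (hk : 1 ≤ k) (hS : #S = 2 * k) {d t : ℝ} (hd : 0 < d)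
    (hm : 2 * ((k : ℝ) ^ 2 + d) ≤ ∑ u ∈ S, ∑ v ∈ S, a u v)
    (ht : ∑ u ∈ S, ∑ v ∈ S, ∑ w ∈ S, a u v * a v w * a u w ≤ 6 * t) :
    2 * k * d < 3 * t := by
  have hg := goodman S a hs h0 h1
  rw [hS] at hg
  push_cast at hg
  set M := ∑ u ∈ S, ∑ v ∈ S, a u v
  have hk' : (1 : ℝ) ≤ k := by exact_mod_cast hk
  have h2 : (2 * (k : ℝ)) * ∑ u ∈ S, ∑ v ∈ S, ∑ w ∈ S, a u v * a v w * a u w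
      ≤ 2 * k * (6 * t) := by gcongr
  have h3 : (2 * ((k : ℝ) ^ 2 + d)) * (4 * d) ≤ M * (2 * M - 4 * (k : ℝ) ^ 2) := by
    apply mul_le_mul hm <;> nlinarith [sq_nonneg (k : ℝ)]
  have h4 : (k : ℝ) * (2 * k * d) < k * (3 * t) := by
    nlinarith [sq_nonneg (k : ℝ), sq_pos_of_pos hd]
  exact lt_of_mul_lt_mul_left h4 (by linarith)

/-! ### Triangles in a graph with more than `⌊n²/4⌋` edges -/

/-- Ordered triangles are at most six times the number of triangles. -/
lemma ordered_triangles_le {V : Type*} [Fintype V] [DecidableEq V] (G : SimpleGraph V)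
    [DecidableRel G.Adj] :
    #{p : V × V × V | G.Adj p.1 p.2.1 ∧ G.Adj p.2.1 p.2.2 ∧ G.Adj p.1 p.2.2} ≤
      6 * #(G.cliqueFinset 3) := by
  refine card_le_mul_card_image_of_maps_to (f := fun p => {p.1, p.2.1, p.2.2}) ?_ 6 ?_
  · rintro ⟨u, v, w⟩ h
    rw [mem_filter] at h
    replace h := h.2
    rw [SimpleGraph.mem_cliqueFinset_iff]
    exact SimpleGraph.is3Clique_iff.2 ⟨u, v, w, h.1, h.2.2, h.2.1, rfl⟩
  · intro s hs
    rw [SimpleGraph.mem_cliqueFinset_iff, SimpleGraph.is3Clique_iff] at hs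
    obtain ⟨a, b, c, hab, hac, hbc, rfl⟩ := hs
    refine (card_le_card (t := {(a, b, c), (a, c, b), (b, a, c), (b, c, a), (c, a, b), (c, b, a)})
      ?_).trans card_le_six
    rintro ⟨u, v, w⟩ h
    simp only [mem_filter, mem_univ, true_and] at h
    obtain ⟨⟨h1, h2, h3⟩, h⟩ := h
    have n1 := h1.ne
    have n2 := h2.ne
    have n3 := h3.ne
    have hu : u ∈ ({a, b, c} : Finset V) := h ▸ by simp
    have hv : v ∈ ({a, b, c} : Finset V) := h ▸ by simp
    have hw : w ∈ ({a, b, c} : Finset V) := h ▸ by simp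
    simp only [mem_insert, mem_singleton, Prod.mk.injEq] at *
    grind

/-- A graph on `n ≥ 3` vertices with `⌊n²/4⌋ + d` edges, `d > 0`, has more than `(n - 2) d / 3`
triangles. -/
lemma triangle_lower_bound {n : ℕ} (hn : 3 ≤ n) (G : SimpleGraph (Fin n)) [DecidableRel G.Adj]
    (d : ℕ) (hd : 0 < d) (hm : #G.edgeFinset = n ^ 2 / 4 + d) :
    ((n : ℝ) - 2) * d < 3 * #(G.cliqueFinset 3) := by
  set t := #(G.cliqueFinset 3)
  set a : Fin n → Fin n → ℝ := fun u v => if G.Adj u v then 1 else 0 with ha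
  have hs : ∀ u v, a u v = a v u := fun u v => by simp [ha, G.adj_comm]
  have h0 : ∀ u v, 0 ≤ a u v := fun u v => by simp only [ha]; split_ifs <;> norm_num
  have h1 : ∀ u v, a u v ≤ 1 := fun u v => by simp only [ha]; split_ifs <;> norm_num
  have hdeg : ∀ u, ∑ v, a u v = G.degree u := fun u => by
    simp only [ha, sum_boole, ← G.card_neighborFinset_eq_degree]
    congr 2; ext; simp
  have hM : ∑ u, ∑ v, a u v = 2 * #G.edgeFinset := by
    simp only [hdeg]; exact_mod_cast G.sum_degrees_eq_twice_card_edges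
  have hT : ∑ u, ∑ v, ∑ w, a u v * a v w * a u w ≤ 6 * t := by
    have := ordered_triangles_le G
    calc ∑ u, ∑ v, ∑ w, a u v * a v w * a u w
        = (#{p : Fin n × Fin n × Fin n |
            G.Adj p.1 p.2.1 ∧ G.Adj p.2.1 p.2.2 ∧ G.Adj p.1 p.2.2} : ℝ) := by
          rw [← sum_boole]
          simp only [Fintype.sum_prod_type]
          refine sum_congr rfl fun u _ => sum_congr rfl fun v _ => sum_congr rfl fun w _ => ?_
          simp only [ha]
          split_ifs <;> simp_all
      _ ≤ 6 * t := by exact_mod_cast this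
  have hd' : (1 : ℝ) ≤ d := by exact_mod_cast hd
  obtain ⟨k, rfl | rfl⟩ := Nat.even_or_odd' n
  · have hf : (2 * k) ^ 2 / 4 = k ^ 2 := by rw [mul_pow]; norm_num
    rw [hf] at hm
    have := goodman_even univ a hs h0 h1 (k := k) (by omega) (by simp) (d := d) (t := t)
      (by linarith) (by rw [hM, hm]; push_cast; rfl) hT
    push_cast
    linarith
  · have hf : (2 * k + 1) ^ 2 / 4 = k * (k + 1) := by
      rw [show (2 * k + 1) ^ 2 = 1 + 4 * (k * (k + 1)) by ring,
        Nat.add_mul_div_left _ _ (by norm_num)]; simp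
    rw [hf] at hm
    have hk : (1 : ℝ) ≤ k := by exact_mod_cast (by omega : 1 ≤ k)
    by_cases hv : ∃ v, G.degree v ≤ k
    · obtain ⟨x, hx⟩ := hv
      have hx' : (G.degree x : ℝ) ≤ k := by exact_mod_cast hx
      have hMx : ∑ u ∈ univ.erase x, ∑ v ∈ univ.erase x, a u v
          = 2 * #G.edgeFinset - 2 * G.degree x := by
        have hxx : a x x = 0 := by simp [ha]
        have e : ∀ u, ∑ v ∈ univ.erase x, a u v = G.degree u - a x u := fun u => by
          have := sum_erase_add univ (a u) (mem_univ x)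
          rw [hdeg] at this; rw [hs x u]; linarith
        have e' := sum_erase_add univ (fun u => (G.degree u : ℝ) - a x u) (mem_univ x)
        simp only [hxx, sum_sub_distrib, hdeg, e] at e'
        have := hM
        simp only [hdeg] at this
        simp only [e, hxx, sum_sub_distrib]
        linarith
      have hTx : ∑ u ∈ univ.erase x, ∑ v ∈ univ.erase x, ∑ w ∈ univ.erase x,
          a u v * a v w * a u w ≤ 6 * t := by
        have nn : ∀ u v w, 0 ≤ a u v * a v w * a u w := fun u v w =>
          mul_nonneg (mul_nonneg (h0 _ _) (h0 _ _)) (h0 _ _)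
        refine le_trans ?_ hT
        refine (sum_le_sum fun u _ => (sum_le_sum fun v _ =>
          sum_le_sum_of_subset_of_nonneg (erase_subset x univ) fun w _ _ => nn u v w).trans
          (sum_le_sum_of_subset_of_nonneg (erase_subset x univ)
            fun v _ _ => sum_nonneg fun w _ => nn u v w)).trans
          (sum_le_sum_of_subset_of_nonneg (erase_subset x univ)
            fun u _ _ => sum_nonneg fun v _ => sum_nonneg fun w _ => nn u v w)
      have := goodman_even (univ.erase x) a hs h0 h1 (k := k) (by omega)
        (by simp) (d := d) (t := t) (by linarith)
        (by rw [hMx, hm]; push_cast; nlinarith) hTx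
      push_cast
      linarith
    · push Not at hv
      -- all degrees exceed `k`, so the handshake lemma makes the excess `d` at least `(k + 1) / 2`
      have hsum : (2 * (k : ℝ) + 1) * (k + 1) ≤ 2 * #G.edgeFinset := by
        rw [← hM]; simp only [hdeg]
        calc (2 * (k : ℝ) + 1) * (k + 1) = ∑ _u : Fin (2 * k + 1), ((k : ℝ) + 1) := by
              simp [mul_add]
          _ ≤ _ := sum_le_sum fun u _ => by exact_mod_cast hv u
      have hg := goodman univ a hs h0 h1
      have hT' := mul_le_mul_of_nonneg_left hT (by positivity : (0 : ℝ) ≤ 2 * k + 1)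
      simp only [card_univ, Fintype.card_fin] at hg
      rw [hM, hm] at hg
      rw [hm] at hsum
      push_cast at hg hsum ⊢
      have hdk : (k : ℝ) + 1 ≤ 2 * d := by nlinarith
      have hkey : 0 < 4 * (d : ℝ) ^ 2 + 4 * d * k - k * (k + 1) := by nlinarith
      have h4 : (2 * (k : ℝ) + 1) * ((2 * k - 1) * d) < (2 * k + 1) * (3 * t) := by nlinarith
      have := lt_of_mul_lt_mul_left h4 (by positivity)
      linarith

/-! ### The extremal triangle-free graph -/

lemma card_odd_fin (n : ℕ) : #{v : Fin n | (v : ℕ) % 2 = 1} = n / 2 := by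
  have h : ∀ n : ℕ, #{v ∈ range n | v % 2 = 1} = n / 2 := by
    intro n
    induction n with
    | zero => simp
    | succ n ih =>
      rw [range_add_one, filter_insert]
      split_ifs
      · rw [card_insert_of_notMem (by simp), ih]; omega
      · rw [ih]; omega
  rw [← h n]
  refine card_bij (fun v _ => (v : ℕ)) (by simp) (fun _ _ _ _ e => Fin.ext e) fun b hb => ?_
  simp only [mem_filter, mem_range] at hb
  exact ⟨⟨b, hb.1⟩, by simpa using hb.2, rfl⟩

/-- Uniqueness in Mantel's theorem: a triangle-free graph with `⌊n²/4⌋` edges is complete bipartite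
with one part of size `⌊n/2⌋`. -/
lemma exists_part_of_triangle_free {n : ℕ} (hn : 3 ≤ n) (G : SimpleGraph (Fin n))
    [DecidableRel G.Adj] (hm : #G.edgeFinset = n ^ 2 / 4) (ht : #(G.cliqueFinset 3) = 0) :
    ∃ A : Finset (Fin n), #A = n / 2 ∧ ∀ u v, G.Adj u v ↔ ¬ (u ∈ A ↔ v ∈ A) := by
  classical
  have hfree : G.CliqueFree 3 := by
    rw [← SimpleGraph.cliqueFinset_eq_empty_iff]; exact card_eq_zero.1 ht
  have hmax : G.IsTuranMaximal 2 := by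
    refine ⟨hfree, fun H _ hH => ?_⟩
    by_contra! hlt
    have h0 : #(H.cliqueFinset 3) = 0 := by
      rw [card_eq_zero]; exact (SimpleGraph.cliqueFinset_eq_empty_iff).2 hH
    have := triangle_lower_bound hn H (#H.edgeFinset - n ^ 2 / 4) (by omega) (by omega)
    rw [h0] at this
    have h3 : (3 : ℝ) ≤ n := by exact_mod_cast hn
    have : (0 : ℝ) ≤ ((n : ℝ) - 2) * ((#H.edgeFinset - n ^ 2 / 4 : ℕ) : ℝ) :=
      mul_nonneg (by linarith) (by positivity)
    simp only [Nat.cast_zero, mul_zero] at *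
    linarith
  obtain ⟨f⟩ := hmax.nonempty_iso_turanGraph
  rw [Fintype.card_fin] at f
  refine ⟨({v | (f v : ℕ) % 2 = 1} : Finset (Fin n)), ?_, fun u v => ?_⟩
  · rw [← card_odd_fin n]
    refine card_bij (fun v _ => f v) (by simp) (fun _ _ _ _ h => f.injective h) fun b hb => ?_
    exact ⟨f.symm b, by simpa using hb, by simp⟩
  · rw [← f.map_adj_iff, SimpleGraph.turanGraph_adj]
    simp only [mem_filter, mem_univ, true_and]
    omega

/-! ### Translation to hypergraphs -/

/-- The graph of pairs of vertices contained in no edge of `𝓔`: the complement of `𝓔_2`. -/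
def nonEdgeGraph {n : ℕ} (𝓔 : Finset (Finset (Fin n))) : SimpleGraph (Fin n) where
  Adj u v := u ≠ v ∧ {u, v} ∉ secE 2 𝓔
  symm := ⟨fun u v h => ⟨h.1.symm, by rw [pair_comm]; exact h.2⟩⟩
  loopless := ⟨fun _ h => h.1 rfl⟩

instance {n : ℕ} (𝓔 : Finset (Finset (Fin n))) : DecidableRel (nonEdgeGraph 𝓔).Adj :=
  fun u v => inferInstanceAs (Decidable (u ≠ v ∧ {u, v} ∉ secE 2 𝓔))

lemma card_of_mem_secE {n k : ℕ} {𝓔 : Finset (Finset (Fin n))} {S : Finset (Fin n)}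
    (h : S ∈ secE k 𝓔) : #S = k := by
  simp only [secE, mem_biUnion, mem_powersetCard] at h
  obtain ⟨_, _, _, h⟩ := h
  exact h

lemma card_of_mem_zeroE {n k : ℕ} {𝓔 : Finset (Finset (Fin n))} {S : Finset (Fin n)}
    (h : S ∈ zeroE univ k 𝓔) : #S = k + 1 := by
  simp only [zeroE, mem_filter, mem_powersetCard] at h
  exact h.1.2

lemma card_secE_add {n : ℕ} (𝓔 : Finset (Finset (Fin n))) :
    #(secE 2 𝓔) + #(nonEdgeGraph 𝓔).edgeFinset = n.choose 2 := by
  have h1 : #(nonEdgeGraph 𝓔).edgeFinset = #((powersetCard 2 univ) \ secE 2 𝓔) := by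
    refine card_bij (fun e _ => e.toFinset) ?_ ?_ ?_
    · intro e
      induction e with | _ u v
      intro h
      rw [SimpleGraph.mem_edgeFinset, SimpleGraph.mem_edgeSet] at h
      have e : (s(u, v) : Sym2 (Fin n)).toFinset = {u, v} := by ext; simp
      rw [e, mem_sdiff, mem_powersetCard]
      exact ⟨⟨subset_univ _, card_pair h.1⟩, h.2⟩
    · intro e _ e' _ h
      ext x
      rw [← Sym2.mem_toFinset, h, Sym2.mem_toFinset]
    · intro P hP
      rw [mem_sdiff, mem_powersetCard, card_eq_two] at hP
      obtain ⟨⟨_, u, v, huv, rfl⟩, h⟩ := hP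
      refine ⟨s(u, v), ?_, by ext; simp⟩
      rw [SimpleGraph.mem_edgeFinset, SimpleGraph.mem_edgeSet]
      exact ⟨huv, h⟩
  have hsub : secE 2 𝓔 ⊆ powersetCard 2 univ := fun S hS =>
    mem_powersetCard.2 ⟨subset_univ _, card_of_mem_secE hS⟩
  rw [h1, add_comm, card_sdiff_add_card_eq_card hsub]
  simp

lemma zeroE_eq {n : ℕ} (𝓔 : Finset (Finset (Fin n))) :
    zeroE univ 2 𝓔 = (nonEdgeGraph 𝓔).cliqueFinset 3 := by
  ext F
  simp only [zeroE, mem_filter, mem_powersetCard, SimpleGraph.mem_cliqueFinset_iff,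
    SimpleGraph.isNClique_iff, SimpleGraph.isClique_iff, subset_univ, true_and]
  constructor
  · rintro ⟨hc, h⟩
    exact ⟨fun u hu v hv huv => ⟨huv, h _ ⟨by simp_all [insert_subset_iff], card_pair huv⟩⟩, hc⟩
  · rintro ⟨h, hc⟩
    refine ⟨hc, fun P hP => ?_⟩
    obtain ⟨hPF, hP⟩ := hP
    obtain ⟨u, v, huv, rfl⟩ := card_eq_two.1 hP
    exact (h (hPF (by simp)) (hPF (by simp)) huv).2

lemma hSum_eq {n : ℕ} (hn : 3 ≤ n) (𝓔 : Finset (Finset (Fin n))) :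
    hSum n 2 𝓔 = 1 - (#(nonEdgeGraph 𝓔).edgeFinset : ℝ) / n.choose 2 +
      (#((nonEdgeGraph 𝓔).cliqueFinset 3) : ℝ) / n.choose 3 := by
  have hdisj : Disjoint (secE 2 𝓔) (zeroE univ 2 𝓔) := by
    rw [disjoint_left]
    intro S h h'
    have := card_of_mem_secE h
    have := card_of_mem_zeroE h'
    omega
  have h2 : (0 : ℝ) < n.choose 2 := by exact_mod_cast Nat.choose_pos (by omega)
  rw [hSum, sum_union hdisj, ← zeroE_eq,
    sum_congr rfl (fun S hS => by rw [card_of_mem_secE hS] :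
      ∀ S ∈ secE 2 𝓔, ((n.choose #S : ℝ))⁻¹ = ((n.choose 2 : ℝ))⁻¹),
    sum_congr rfl (fun S hS => by rw [card_of_mem_zeroE hS] :
      ∀ S ∈ zeroE univ 2 𝓔, ((n.choose #S : ℝ))⁻¹ = ((n.choose 3 : ℝ))⁻¹)]
  have h := card_secE_add 𝓔
  have h' : (#(secE 2 𝓔) : ℝ) = n.choose 2 - #(nonEdgeGraph 𝓔).edgeFinset := by
    rw [← h]; push_cast; ring
  simp only [sum_const, nsmul_eq_mul, h']
  field_simp

lemma choose_three_eq {n : ℕ} (hn : 3 ≤ n) :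
    3 * (n.choose 3 : ℝ) = (n - 2) * n.choose 2 := by
  have := Nat.choose_succ_right_eq n 2
  have h : ((n - 2 : ℕ) : ℝ) = n - 2 := by push_cast [show 2 ≤ n by omega]; rfl
  rw [← h]
  exact_mod_cast (by linarith : 3 * n.choose 3 = (n - 2) * n.choose 2)

/-- The lower bound for `hSum`, together with what equality forces on the graph of non-edges. -/
lemma hSum_lower {n : ℕ} (hn : 3 ≤ n) (𝓔 : Finset (Finset (Fin n))) :
    1 - ((n ^ 2 / 4 : ℕ) : ℝ) / (n.choose 2 : ℝ) ≤ hSum n 2 𝓔 ∧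
    (hSum n 2 𝓔 = 1 - ((n ^ 2 / 4 : ℕ) : ℝ) / (n.choose 2 : ℝ) →
      #(nonEdgeGraph 𝓔).edgeFinset = n ^ 2 / 4 ∧ #((nonEdgeGraph 𝓔).cliqueFinset 3) = 0) := by
  rw [hSum_eq hn]
  set m := #(nonEdgeGraph 𝓔).edgeFinset with hm
  set t := #((nonEdgeGraph 𝓔).cliqueFinset 3) with ht
  set f := n ^ 2 / 4
  have h2 : (0 : ℝ) < n.choose 2 := by exact_mod_cast Nat.choose_pos (by omega)
  have h3 : (0 : ℝ) < n.choose 3 := by exact_mod_cast Nat.choose_pos hn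
  have ht0 : (0 : ℝ) ≤ t / n.choose 3 := by positivity
  rcases lt_or_ge f m with h | h
  · have hb := triangle_lower_bound hn (nonEdgeGraph 𝓔) (m - f) (by omega)
      (by rw [← hm]; omega)
    rw [← ht, Nat.cast_sub h.le] at hb
    have hlt : ((m : ℝ) - f) / n.choose 2 < t / n.choose 3 := by
      rw [div_lt_div_iff₀ h2 h3]
      have := choose_three_eq hn
      nlinarith
    rw [sub_div] at hlt
    constructor
    · linarith
    · intro he; linarith
  · have hle : (m : ℝ) / n.choose 2 ≤ f / n.choose 2 := by gcongr
    refine ⟨by linarith, fun he => ?_⟩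
    have e1 : (m : ℝ) / n.choose 2 = f / n.choose 2 := by linarith
    have e2 : (t : ℝ) / n.choose 3 = 0 := by linarith
    constructor
    · rw [div_left_inj' h2.ne'] at e1; exact_mod_cast e1
    · rw [div_eq_zero_iff] at e2
      exact_mod_cast e2.resolve_right h3.ne'

/-- The sum for a hypergraph whose `𝓔_2` consists of the pairs inside `A` and inside `Aᶜ`. -/
lemma hSum_of_part {n : ℕ} (hn : 3 ≤ n) (𝓔 : Finset (Finset (Fin n))) (A : Finset (Fin n))
    (hA : #A = n / 2)
    (h : ∀ P : Finset (Fin n), #P = 2 → (P ∈ secE 2 𝓔 ↔ (P ⊆ A ∨ P ⊆ Aᶜ))) :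
    hSum n 2 𝓔 = 1 - ((n ^ 2 / 4 : ℕ) : ℝ) / (n.choose 2 : ℝ) := by
  have hadj : ∀ u v, (nonEdgeGraph 𝓔).Adj u v ↔ ¬ (u ∈ A ↔ v ∈ A) := by
    intro u v
    change u ≠ v ∧ {u, v} ∉ secE 2 𝓔 ↔ _
    by_cases huv : u = v
    · simp [huv]
    · rw [h _ (card_pair huv)]
      simp only [insert_subset_iff, singleton_subset_iff, mem_compl]
      tauto
  have ht : #((nonEdgeGraph 𝓔).cliqueFinset 3) = 0 := by
    rw [card_eq_zero, eq_empty_iff_forall_notMem]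
    intro F hF
    rw [SimpleGraph.mem_cliqueFinset_iff, SimpleGraph.is3Clique_iff] at hF
    obtain ⟨a, b, c, h1, h2, h3, -⟩ := hF
    rw [hadj] at h1 h2 h3
    tauto
  have hm : #(nonEdgeGraph 𝓔).edgeFinset = n ^ 2 / 4 := by
    have e1 : #(nonEdgeGraph 𝓔).edgeFinset = #(A ×ˢ Aᶜ) := by
      symm
      refine card_bij (fun p _ => s(p.1, p.2)) ?_ ?_ ?_
      · rintro ⟨u, v⟩ hp
        simp only [mem_product, mem_compl] at hp
        rw [SimpleGraph.mem_edgeFinset, SimpleGraph.mem_edgeSet, hadj]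
        tauto
      · rintro ⟨u, v⟩ hp ⟨u', v'⟩ hp' he
        simp only [mem_product, mem_compl] at hp hp'
        rw [Sym2.eq_iff] at he
        rcases he with ⟨rfl, rfl⟩ | ⟨rfl, rfl⟩
        · rfl
        · exact absurd hp.1 hp'.2
      · intro e
        induction e with | _ u v
        intro he
        rw [SimpleGraph.mem_edgeFinset, SimpleGraph.mem_edgeSet, hadj] at he
        by_cases hu : u ∈ A
        · exact ⟨(u, v), by simp only [mem_product, mem_compl]; tauto, rfl⟩
        · exact ⟨(v, u), by simp only [mem_product, mem_compl]; tauto, Sym2.eq_swap⟩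
    rw [e1, card_product, card_compl, hA, Fintype.card_fin]
    obtain ⟨k, rfl | rfl⟩ := Nat.even_or_odd' n
    · rw [show (2 * k) ^ 2 = 4 * (k * k) by ring, Nat.mul_div_cancel_left _ (by norm_num),
        Nat.mul_div_cancel_left _ (by norm_num), show 2 * k - k = k by omega]
    · rw [show (2 * k + 1) ^ 2 = 1 + 4 * (k * (k + 1)) by ring,
        Nat.add_mul_div_left _ _ (by norm_num), show (2 * k + 1) / 2 = k by omega,
        show 2 * k + 1 - k = k + 1 by omega]
      simp
  rw [hSum_eq hn, hm, ht]
  simp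

theorem s'_two_extremal (n : ℕ) (hn : 3 ≤ n) :
    s'Val n 2 = 1 - ((n ^ 2 / 4 : ℕ) : ℝ) / (n.choose 2 : ℝ) ∧
    ∀ 𝓔 : Finset (Finset (Fin n)),
      (hSum n 2 𝓔 = 1 - ((n ^ 2 / 4 : ℕ) : ℝ) / (n.choose 2 : ℝ) ↔
        ∃ A : Finset (Fin n), A.card = n / 2 ∧
          ∀ P : Finset (Fin n), P.card = 2 →
            (P ∈ secE 2 𝓔 ↔ (P ⊆ A ∨ P ⊆ Aᶜ))) := by
  constructor
  · refine IsLeast.csInf_eq ⟨?_, ?_⟩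
    -- the minimum is attained by the two-edge hypergraph `{A, Aᶜ}`
    · obtain ⟨A, -, hA⟩ := exists_subset_card_eq (s := (univ : Finset (Fin n))) (n := n / 2)
        (by simp; omega)
      refine ⟨{A, Aᶜ}, (hSum_of_part hn _ A hA fun P hP => ?_).symm⟩
      simp [secE, mem_powersetCard, hP]
    · rintro r ⟨𝓔, rfl⟩
      exact (hSum_lower hn 𝓔).1
  · intro 𝓔
    refine ⟨fun h => ?_, fun ⟨A, hA, h⟩ => hSum_of_part hn 𝓔 A hA h⟩
    obtain ⟨hm, ht⟩ := (hSum_lower hn 𝓔).2 h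
    obtain ⟨A, hA, hadj⟩ := exists_part_of_triangle_free hn _ hm ht
    refine ⟨A, hA, fun P hP => ?_⟩
    obtain ⟨u, v, huv, rfl⟩ := card_eq_two.1 hP
    have : (u ≠ v ∧ {u, v} ∉ secE 2 𝓔) ↔ _ := hadj u v
    simp only [insert_subset_iff, singleton_subset_iff, mem_compl]
    tauto
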